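/- arXiv:1907.12081 — 2 statements merged into one kernel-verified Lean document; each statement's English description precedes it below -/
import Mathlib

section
/- Let g be a post-Lie algebra over a field of characteristic zero and let {T_n} be its post-symmetric brace operations. Then for every n ≥ 2, every 1 ≤ i ≤ n−1, all x_1, …, x_n ∈ g and all y ∈ g: T_n(x_1, …, x_i, x_{i+1}, …, x_n; y) − T_n(x_1, …, x_{i+1}, x_i, …, x_n; y) = T_{n−1}(x_1, …, [x_i, x_{i+1}], …, x_n; y), where on the right-hand side the pair (x_i, x_{i+1}) is replaced by the single argument [x_i, x_{i+1}]. -/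
/-- The post-symmetric brace operations of a post-Lie algebra, as a single operation on
lists: `brace t [] y = y`, `brace t [x] y = t x y`, and for `n ≥ 2`
`brace t (x :: X) y = t x (brace t X y) - ∑ₖ brace t (X with xₖ replaced by t x xₖ) y`. -/
def brace {K : Type*} [Field K] {g : Type*} [AddCommGroup g] [Module K g]
    (t : g →ₗ[K] g →ₗ[K] g) : List g → g → g
  | [], y => y
  | x :: X, y =>
      t x (brace t X y) -
        ∑ k ∈ Finset.range X.length, brace t (X.set k (t x (X.getD k 0))) y
  termination_by l _ => l.length
  decreasing_by
    all_goals (simp only [List.length_set, List.length_cons]; omega)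

/-- derivation-type sum -/
def dsum {g : Type*} [AddCommGroup g] (d : g → g) : (List g → g) → List g → g
  | _, [] => 0
  | F, a :: X => F (d a :: X) + dsum d (fun Y => F (a :: Y)) X

theorem dsum_eq {g : Type*} [AddCommGroup g] (d : g → g) (F : List g → g) (X : List g) :
    ∑ k ∈ Finset.range X.length, F (X.set k (d (X.getD k 0))) = dsum d F X := by
  induction X generalizing F with
  | nil => simp [dsum]
  | cons a X ih =>
    rw [List.length_cons, Finset.sum_range_succ', dsum, ← ih, add_comm]
    simp

theorem dsum_congr {g : Type*} [AddCommGroup g] (d : g → g) (F G : List g → g) (X : List g)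
    (h : ∀ Y : List g, Y.length = X.length → F Y = G Y) : dsum d F X = dsum d G X := by
  induction X generalizing F G with
  | nil => simp [dsum]
  | cons a X ih =>
    rw [dsum, dsum, h _ (by simp), ih _ (fun Y => G (a :: Y)) (fun Y hY => h _ (by simp [hY]))]

theorem dsum_add {g : Type*} [AddCommGroup g] (d : g → g) (F G : List g → g) (X : List g) :
    dsum d (fun Y => F Y + G Y) X = dsum d F X + dsum d G X := by
  induction X generalizing F G with
  | nil => simp [dsum]
  | cons a X ih => simp only [dsum, ih]; abel

theorem dsum_map {g : Type*} [AddCommGroup g] (d : g → g) (f : g →+ g) (F : List g → g)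
    (X : List g) : dsum d (fun Y => f (F Y)) X = f (dsum d F X) := by
  induction X generalizing F with
  | nil => simp [dsum]
  | cons a X ih => simp only [dsum, ih, map_add]

theorem dsum_sub {g : Type*} [AddCommGroup g] (d : g → g) (F G : List g → g) (X : List g) :
    dsum d (fun Y => F Y - G Y) X = dsum d F X - dsum d G X := by
  induction X generalizing F G with
  | nil => simp [dsum]
  | cons a X ih => simp only [dsum, ih]; abel

/-- additivity in each slot on lists of length `N` -/
def SlotAdd {g : Type*} [AddCommGroup g] (N : ℕ) (F : List g → g) : Prop :=
  ∀ (A B : List g) (a b : g), A.length + B.length + 1 = N →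
    F (A ++ (a + b) :: B) = F (A ++ a :: B) + F (A ++ b :: B)

theorem SlotAdd.cons {g : Type*} [AddCommGroup g] {N : ℕ} {F : List g → g}
    (h : SlotAdd (N + 1) F) (c : g) : SlotAdd N (fun Y => F (c :: Y)) := by
  intro A B a b hN
  exact h (c :: A) B a b (by simp only [List.length_cons]; omega)

theorem SlotAdd.head {g : Type*} [AddCommGroup g] {F : List g → g} {B : List g}
    (h : SlotAdd (B.length + 1) F) (a b : g) : F ((a + b) :: B) = F (a :: B) + F (b :: B) :=
  h [] B a b (by simp)

theorem SlotAdd.head_sub {g : Type*} [AddCommGroup g] {F : List g → g} {B : List g}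
    (h : SlotAdd (B.length + 1) F) (a b : g) : F ((a - b) :: B) = F (a :: B) - F (b :: B) := by
  have := h.head (a - b) b
  rw [sub_add_cancel] at this
  rw [this]; abel

theorem dsum_add_d {g : Type*} [AddCommGroup g] (d e f : g → g) (hd : ∀ a, f a = d a + e a)
    (F : List g → g) (X : List g)
    (h : SlotAdd X.length F) : dsum f F X = dsum d F X + dsum e F X := by
  induction X generalizing F with
  | nil => simp [dsum]
  | cons a X ih =>
    rw [List.length_cons] at h
    simp only [dsum, ih _ (h.cons a), hd, h.head]
    abel

theorem dsum_slotAdd {g : Type*} [AddCommGroup g] (d : g →+ g) (N : ℕ)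
    (F : List g → g) (h : SlotAdd N F) : SlotAdd N (dsum d F) := by
  intro A B a b hN
  induction A generalizing F N with
  | nil =>
    simp only [List.length_nil, zero_add] at hN
    subst hN
    have e : dsum d (fun Y => F ((a + b) :: Y)) B
        = dsum d (fun Y => F (a :: Y) + F (b :: Y)) B :=
      dsum_congr _ _ _ _ fun Y hY => SlotAdd.head (by rw [hY]; exact h) a b
    simp only [List.nil_append, dsum, map_add, h.head, e, dsum_add]
    abel
  | cons c A ih =>
    simp only [List.length_cons] at hN
    subst hN
    have h' : SlotAdd (A.length + B.length + 1 + 1) F := by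
      convert h using 1; omega
    have e := ih _ _ (h'.cons c) rfl
    simp only [List.cons_append, dsum, e]
    have e2 := h' (d c :: A) B a b (by simp only [List.length_cons]; omega)
    simp only [List.cons_append] at e2
    rw [e2]; abel

theorem dsum_comm {g : Type*} [AddCommGroup g] (dx dy dxy dyx dl : g → g)
    (hl : ∀ z, dl z = (dx (dy z) - dxy z) - (dy (dx z) - dyx z))
    (F : List g → g) (B : List g) (h : SlotAdd B.length F) :
    dsum dxy F B - dsum dyx F B + dsum dx (dsum dy F) B - dsum dy (dsum dx F) B
      = - dsum dl F B := by
  induction B generalizing F with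
  | nil => simp [dsum]
  | cons b B ih =>
    rw [List.length_cons] at h
    have e := ih _ (h.cons b)
    simp only [dsum, dsum_add, hl, h.head_sub]
    rw [← neg_eq_iff_eq_neg] at e
    rw [← e]
    abel

theorem dsum_swap {g : Type*} [LieRing g] (d : g → g)
    (hd : ∀ x y : g, d ⁅x, y⁆ = ⁅d x, y⁆ + ⁅x, d y⁆) (F : List g → g)
    (A B : List g) (x y : g) (hA : SlotAdd (A.length + B.length + 1) F)
    (h : ∀ (A' B' : List g) (x y : g), A'.length = A.length → 
      F (A' ++ x :: y :: B') - F (A' ++ y :: x :: B') = F (A' ++ ⁅x, y⁆ :: B')) :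
    dsum d F (A ++ x :: y :: B) - dsum d F (A ++ y :: x :: B) = dsum d F (A ++ ⁅x, y⁆ :: B) := by
  induction A generalizing F with
  | nil =>
    have h' : ∀ (B' : List g) (x y : g),
      F (x :: y :: B') - F (y :: x :: B') = F (⁅x, y⁆ :: B') := fun B' x y => h [] B' x y rfl
    simp only [List.length_nil, zero_add] at hA
    simp only [List.nil_append, dsum, hd, hA.head, ← h', dsum_sub]
    abel
  | cons c A ih =>
    have hA' : SlotAdd (A.length + B.length + 1 + 1) F := by
      convert hA using 1; simp only [List.length_cons]; omega
    have e := ih _ (hA'.cons c) (fun A' B' x y hl => h (c :: A') B' x y (by simp [hl]))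
    have e2 := h (d c :: A) B x y (by simp)
    simp only [List.cons_append] at e2
    simp only [List.cons_append, dsum, ← e, ← e2]
    abel

theorem brace_nil {K : Type*} [Field K] {g : Type*} [AddCommGroup g] [Module K g]
    (t : g →ₗ[K] g →ₗ[K] g) (u : g) : brace t [] u = u := by
  rw [brace]

theorem brace_cons {K : Type*} [Field K] {g : Type*} [AddCommGroup g] [Module K g]
    (t : g →ₗ[K] g →ₗ[K] g) (x : g) (X : List g) (u : g) :
    brace t (x :: X) u = t x (brace t X u) - dsum (t x) (fun Y => brace t Y u) X := by
  rw [brace, ← dsum_eq]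

theorem brace_slotAdd {K : Type*} [Field K] {g : Type*} [AddCommGroup g] [Module K g]
    (t : g →ₗ[K] g →ₗ[K] g) (u : g) (N : ℕ) : SlotAdd N (fun Y => brace t Y u) := by
  induction N with
  | zero => intro A B a b h; omega
  | succ N ih =>
    intro A B a b h
    cases A with
    | nil =>
      simp only [List.length_nil, zero_add, Nat.add_right_cancel_iff] at h
      subst h
      simp only [List.nil_append, brace_cons]
      rw [dsum_add_d (t a) (t b) (t (a + b)) (by simp) _ _ ih]
      simp only [map_add, LinearMap.add_apply]
      abel
    | cons c A =>
      have hN : A.length + B.length + 1 = N := by simp only [List.length_cons] at h; omega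
      simp only [List.cons_append, brace_cons]
      have e1 := ih A B a b hN
      have e2 := dsum_slotAdd (t c).toAddMonoidHom N _ ih A B a b hN
      simp only [LinearMap.toAddMonoidHom_coe] at e1 e2
      rw [e1, e2, map_add]
      abel

/-- Swapping two adjacent arguments of the post-symmetric brace `T_n` changes the result
by the brace `T_{n-1}` with the pair replaced by its Lie bracket:
`T_n(…, xᵢ, xᵢ₊₁, …; y) − T_n(…, xᵢ₊₁, xᵢ, …; y) = T_{n−1}(…, [xᵢ, xᵢ₊₁], …; y)`. -/
theorem brace_swap_adjacent {K : Type*} [Field K] [CharZero K]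
    {g : Type*} [LieRing g] [LieAlgebra K g] (t : g →ₗ[K] g →ₗ[K] g)
    (h1 : ∀ z x y : g, t z ⁅x, y⁆ = ⁅t z x, y⁆ + ⁅x, t z y⁆)
    (h2 : ∀ x y z : g, t ⁅x, y⁆ z =
      (t x (t y z) - t (t x y) z) - (t y (t x z) - t (t y x) z))
    (A B : List g) (x y u : g) :
    brace t (A ++ x :: y :: B) u - brace t (A ++ y :: x :: B) u
      = brace t (A ++ ⁅x, y⁆ :: B) u := by
  have main : ∀ (n : ℕ) (A B : List g) (x y : g), A.length = n →
      brace t (A ++ x :: y :: B) u - brace t (A ++ y :: x :: B) u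
        = brace t (A ++ ⁅x, y⁆ :: B) u := by
    intro n
    induction n with
    | zero =>
      intro A B x y hA
      obtain rfl := List.length_eq_zero_iff.mp hA
      have e := dsum_comm (t x) (t y) (t (t x y)) (t (t y x)) (t ⁅x, y⁆) (h2 x y)
        (fun Y => brace t Y u) B (brace_slotAdd t u _)
      have mx := dsum_map (t x) (t y).toAddMonoidHom (fun Y => brace t Y u) B
      have my := dsum_map (t y) (t x).toAddMonoidHom (fun Y => brace t Y u) B
      simp only [LinearMap.toAddMonoidHom_coe] at mx my
      simp only [List.nil_append, brace_cons, dsum, dsum_sub, mx, my, map_sub, h2 x y]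
      rw [← neg_eq_iff_eq_neg] at e
      rw [← e]
      abel
    | succ n ih =>
      intro A B x y hA
      cases A with
      | nil => simp at hA
      | cons c A =>
        have hn : A.length = n := by simpa using hA
        have e := dsum_swap (t c) (h1 c) (fun Y => brace t Y u) A B x y
          (brace_slotAdd t u _) (fun A' B' x y h => ih A' B' x y (h.trans hn))
        simp only [List.cons_append, brace_cons]
        rw [← e, ← ih A B x y hn, map_sub]
        abel
  exact main _ A B x y rfl
end

section
/- Let g be a post-Lie algebra over a field of characteristic zero with post-symmetric brace operations {T_n}, regarded as a single operation T(X; y) on finite lists X of elements of g (with T((); y) = y). Then for every list X = (x_1, …, x_n) of elements of g and all u, v ∈ g: T(X; [u, v]) = Σ_{S ⊆ {1, …, n}} [ T(X_S; u), T(X_{S^c}; v) ], where the sum ranges over all subsets S of {1, …, n}, S^c is the complement of S, and X_S denotes the sublist of X consisting of the entries x_j with j ∈ S taken in increasing order of j (with X_∅ the empty list). -/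
def PP {g M : Type*} [AddCommGroup M] : (List g → List g → M) → List g → M
  | φ, [] => φ [] []
  | φ, x :: X => PP (fun A B => φ (x :: A) B) X + PP (fun A B => φ A (x :: B)) X

theorem PP_add {g M : Type*} [AddCommGroup M] (X : List g) :
    ∀ φ ψ : List g → List g → M, PP (fun A B => φ A B + ψ A B) X = PP φ X + PP ψ X := by
  induction X with
  | nil => intro φ ψ; simp [PP]
  | cons x X ih => intro φ ψ; simp only [PP, ih]; abel

theorem PP_map {g M : Type*} [AddCommGroup M] (f : M →+ M) (X : List g) :
    ∀ φ : List g → List g → M, f (PP φ X) = PP (fun A B => f (φ A B)) X := by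
  induction X with
  | nil => intro φ; simp [PP]
  | cons x X ih => intro φ; simp only [PP, map_add, ih]

def DD {g M : Type*} [AddCommGroup g] [AddCommGroup M] (d : g → g) (ψ : List g → M)
    (A : List g) : M :=
  ∑ k ∈ Finset.range A.length, ψ (A.set k (d (A.getD k 0)))

theorem DD_nil {g M : Type*} [AddCommGroup g] [AddCommGroup M] (d : g → g) (ψ : List g → M) :
    DD d ψ [] = 0 := by simp [DD]

theorem DD_cons {g M : Type*} [AddCommGroup g] [AddCommGroup M] (d : g → g) (ψ : List g → M)
    (a : g) (A : List g) :
    DD d ψ (a :: A) = ψ (d a :: A) + DD d (fun Y => ψ (a :: Y)) A := by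
  simp only [DD, List.length_cons, Finset.sum_range_succ']
  simp [add_comm]

theorem DD_add {g M : Type*} [AddCommGroup g] [AddCommGroup M] (d : g → g) (ψ χ : List g → M)
    (A : List g) : DD d (fun Y => ψ Y + χ Y) A = DD d ψ A + DD d χ A := by
  simp [DD, Finset.sum_add_distrib]

theorem DD_PP {g M : Type*} [AddCommGroup g] [AddCommGroup M] (d : g → g) (X : List g) :
    ∀ φ : List g → List g → M, DD d (fun Y => PP φ Y) X =
      PP (fun A B => DD d (fun Y => φ Y B) A + DD d (fun Y => φ A Y) B) X := by
  induction X with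
  | nil => intro φ; simp [PP, DD_nil]
  | cons x X ih =>
    intro φ
    simp only [DD_cons, PP, DD_add, ih, PP_add]
    abel

theorem sum_finset_fin_succ {M : Type*} [AddCommGroup M] (n : ℕ) (f : Finset (Fin (n + 1)) → M) :
    ∑ S, f S = ∑ S : Finset (Fin n), f (insert 0 (S.image Fin.succ)) +
      ∑ S : Finset (Fin n), f (S.image Fin.succ) := by
  have h0 : (Finset.univ : Finset (Fin (n + 1))) = insert 0 (Finset.univ.image Fin.succ) := by
    ext i; cases i using Fin.cases <;> simp
  have hi : Function.Injective (Finset.image (Fin.succ : Fin n → Fin (n + 1))) :=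
    Finset.image_injective (Fin.succ_injective n)
  rw [← Finset.powerset_univ, h0, Finset.sum_powerset_insert (by simp), Finset.powerset_image,
    Finset.sum_image hi.injOn, Finset.sum_image hi.injOn, Finset.powerset_univ, add_comm]

theorem sum_eq_PP {g M : Type*} [AddCommGroup M] (X : List g) :
    ∀ φ : List g → List g → M,
    ∑ S : Finset (Fin X.length),
      φ (((List.finRange X.length).filter (fun j => j ∈ S)).map X.get)
        (((List.finRange X.length).filter (fun j => j ∈ Sᶜ)).map X.get) = PP φ X := by
  induction X with
  | nil => intro φ; simp [PP, Finset.univ_unique]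
  | cons x X ih =>
    intro φ
    simp only [PP, ← ih]
    refine (sum_finset_fin_succ X.length _).trans ?_
    have hs : ∀ (i : Fin X.length), ¬ Fin.succ i = 0 := fun i => Fin.succ_ne_zero i
    congr 1 <;> refine Finset.sum_congr rfl fun S _ => ?_ <;>
    · simp [List.finRange_succ, List.filter_map, Function.comp_def]
      rfl

theorem brace_PP {K : Type*} [Field K]
    {g : Type*} [LieRing g] [LieAlgebra K g] (t : g →ₗ[K] g →ₗ[K] g)
    (h1 : ∀ z x y : g, t z ⁅x, y⁆ = ⁅t z x, y⁆ + ⁅x, t z y⁆) (u v : g) (n : ℕ) :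
    ∀ X : List g, X.length = n →
    brace t X ⁅u, v⁆ = PP (fun A B => ⁅brace t A u, brace t B v⁆) X := by
  have hb : ∀ x A y, t x (brace t A y) = brace t (x :: A) y + DD (t x) (fun Y => brace t Y y) A := by
    intro x A y
    rw [brace, DD]; abel
  induction n with
  | zero =>
    intro X hX
    obtain rfl := List.length_eq_zero_iff.mp hX
    simp [PP, brace]
  | succ n ih =>
    intro X hX
    obtain _ | ⟨x, X⟩ := X
    · simp at hX
    have hX' : X.length = n := by simpa using hX
    have e : DD (t x) (fun Y => brace t Y ⁅u, v⁆) X =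
        DD (t x) (fun Y => PP (fun A B => ⁅brace t A u, brace t B v⁆) Y) X := by
      unfold DD
      refine Finset.sum_congr rfl fun k _ => ih _ (by simpa using hX')
    have e1 := hb x X ⁅u, v⁆
    rw [e, ih X hX', DD_PP] at e1
    have e2 := PP_map (t x).toAddMonoidHom X (fun A B => ⁅brace t A u, brace t B v⁆)
    simp only [LinearMap.toAddMonoidHom_coe] at e2
    rw [e2] at e1
    have e3 : ∀ A B : List g, t x ⁅brace t A u, brace t B v⁆ =
       (⁅brace t (x :: A) u, brace t B v⁆ + ⁅brace t A u, brace t (x :: B) v⁆) +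
        (DD (t x) (fun Y => ⁅brace t Y u, brace t B v⁆) A +
          DD (t x) (fun Y => ⁅brace t A u, brace t Y v⁆) B) := by
      intro A B
      rw [h1, hb, hb]
      simp only [DD, add_lie, lie_add, sum_lie, lie_sum]
      abel
    simp only [e3] at e1
    rw [PP_add] at e1
    rw [← add_right_cancel e1, PP_add, PP]

/-- The compatibility of the post-symmetric braces with the Lie bracket:
`T(X; [u,v]) = Σ_{S ⊆ {1,…,n}} [T(X_S; u), T(X_{Sᶜ}; v)]`. -/
theorem brace_bracket {K : Type*} [Field K] [CharZero K]
    {g : Type*} [LieRing g] [LieAlgebra K g] (t : g →ₗ[K] g →ₗ[K] g)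
    (h1 : ∀ z x y : g, t z ⁅x, y⁆ = ⁅t z x, y⁆ + ⁅x, t z y⁆)
    (h2 : ∀ x y z : g, t ⁅x, y⁆ z =
      (t x (t y z) - t (t x y) z) - (t y (t x z) - t (t y x) z))
    (X : List g) (u v : g) :
    brace t X ⁅u, v⁆ =
      ∑ S : Finset (Fin X.length),
        ⁅brace t (((List.finRange X.length).filter (fun j => j ∈ S)).map X.get) u,
          brace t (((List.finRange X.length).filter (fun j => j ∈ Sᶜ)).map X.get) v⁆ := by
  rw [sum_eq_PP X (fun A B => ⁅brace t A u, brace t B v⁆)]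
  exact brace_PP t h1 u v X.length X rfl
end
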